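/- arXiv:1604.05439 — 2 statements merged into one kernel-verified Lean document; each statement's English description precedes it below -/
import Mathlib

section
/- Let E be a graph with finitely many vertices in which every transition state has exactly one outgoing edge. Then the family of sets (saturation of H(γ)) \ (saturation of H(γ) \ γ), indexed by the components γ ∈ Γ_E, is a partition of E⁰: these sets are pairwise disjoint for distinct components and their union is all of E⁰. -/
attribute [local instance] Classical.propDecidable

/-- A directed graph: a set of vertices, a set of edges, and source/range maps. -/
structure DirGraph : Type 1 where
  V : Type
  E : Type
  s : E → V
  r : E → V

namespace DirGraph

variable (G : DirGraph)

/-- A vertex is regular if it emits a finite nonzero number of edges. -/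
def Regular (v : G.V) : Prop :=
  {e : G.E | G.s e = v}.Finite ∧ {e : G.E | G.s e = v}.Nonempty

/-- A vertex is a sink if it emits no edges. -/
def IsSink (v : G.V) : Prop := ∀ e : G.E, G.s e ≠ v

/-- A vertex is an infinite emitter if it emits infinitely many edges. -/
def InfiniteEmitter (v : G.V) : Prop := {e : G.E | G.s e = v}.Infinite

/-- One-step reachability: there is an edge from `u` to `v`. -/
def Step (u v : G.V) : Prop := ∃ e : G.E, G.s e = u ∧ G.r e = v

/-- `Reach u v` means there is a (possibly empty) path from `u` to `v`, i.e. `u ≥ v`. -/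
def Reach : G.V → G.V → Prop := Relation.ReflTransGen G.Step

/-- A vertex supports a cycle if there is a nonempty path from it to itself. -/
def SupportsCycle (v : G.V) : Prop := Relation.TransGen G.Step v v

/-- A transition state is a regular vertex which does not support a cycle. -/
def TransitionState (v : G.V) : Prop := G.Regular v ∧ ¬ G.SupportsCycle v

/-- A set of vertices is hereditary if it is closed under reachability. -/
def Hereditary (H : Set G.V) : Prop := ∀ u v : G.V, u ∈ H → G.Reach u v → v ∈ H

/-- A set of vertices is saturated if it contains every regular vertex all of whose
emitted edges end in the set. -/
def Saturated (S : Set G.V) : Prop :=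
  ∀ v : G.V, G.Regular v → (∀ e : G.E, G.s e = v → G.r e ∈ S) → v ∈ S

/-- `H(S)`: the smallest hereditary set containing `S`. -/
def heredClosure (S : Set G.V) : Set G.V := ⋂₀ {H : Set G.V | G.Hereditary H ∧ S ⊆ H}

/-- The saturation of `S`: the smallest saturated set containing `S`. -/
def saturate (S : Set G.V) : Set G.V := ⋂₀ {T : Set G.V | G.Saturated T ∧ S ⊆ T}

/-- A nonempty set is strongly connected if any two of its vertices are joined by
a nonempty path. -/
def StronglyConn (S : Set G.V) : Prop :=
  S.Nonempty ∧ ∀ u ∈ S, ∀ v ∈ S, Relation.TransGen G.Step u v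

/-- The components of `G` (elements of `Γ_E`): maximal strongly connected subsets together
with singletons of singular vertices not supporting a cycle. -/
def IsComponent (γ : Set G.V) : Prop :=
  (G.StronglyConn γ ∧ ∀ δ : Set G.V, G.StronglyConn δ → γ ⊆ δ → δ = γ) ∨
  (∃ v : G.V, γ = {v} ∧ ¬ G.Regular v ∧ ¬ G.SupportsCycle v)

/-- The order on components: `γ ≥ δ` iff some vertex of `γ` reaches some vertex of `δ`. -/
def CompGE (γ δ : Set G.V) : Prop := ∃ u ∈ γ, ∃ w ∈ δ, G.Reach u w

/-- `η` is a hereditary set of components. -/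
def HeredComp (η : Set (Set G.V)) : Prop :=
  (∀ γ ∈ η, G.IsComponent γ) ∧
  ∀ γ δ : Set G.V, γ ∈ η → G.IsComponent δ → G.CompGE γ δ → δ ∈ η

/-- A list of edges is a path if consecutive edges are composable. -/
def IsPathChain (p : List G.E) : Prop := List.Chain' (fun e f => G.r e = G.s f) p

/-- `p` is a return path based at `v`: a nonempty path from `v` to `v` not revisiting `v`
before the final edge. -/
def IsReturnPath (v : G.V) (p : List G.E) : Prop :=
  ∃ h : p ≠ [], G.IsPathChain p ∧ G.s (p.head h) = v ∧ G.r (p.getLast h) = v ∧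
    ∀ e ∈ p.dropLast, G.r e ≠ v

/-- `v` supports (at least) two distinct return paths. -/
def TwoReturnPaths (v : G.V) : Prop :=
  ∃ p q : List G.E, G.IsReturnPath v p ∧ G.IsReturnPath v q ∧ p ≠ q

/-- `v` supports a unique return path. -/
def UniqueReturnPath (v : G.V) : Prop := ∃! p : List G.E, G.IsReturnPath v p

/-- A component is cyclic if each of its vertices supports exactly one return path. -/
def CyclicComponent (γ : Set G.V) : Prop :=
  G.IsComponent γ ∧ ∀ v ∈ γ, G.UniqueReturnPath v

/-- Condition (K): every vertex supports either no return path or at least two. -/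
def ConditionK : Prop :=
  ∀ v : G.V, (¬ ∃ p : List G.E, G.IsReturnPath v p) ∨ G.TwoReturnPaths v

/-- The cycle (or path) `p` has an exit. -/
def HasExit (p : List G.E) : Prop := ∃ f e : G.E, e ∈ p ∧ G.s f = G.s e ∧ f ≠ e

/-- `p` is a nonempty path from `v` to `w`. -/
def IsPathFromTo (v w : G.V) (p : List G.E) : Prop :=
  ∃ h : p ≠ [], G.IsPathChain p ∧ G.s (p.head h) = v ∧ G.r (p.getLast h) = w

/-- Condition (H). -/
def ConditionH : Prop :=
  ∀ v : G.V, G.Regular v → G.UniqueReturnPath v →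
    (∀ p : List G.E, G.IsReturnPath v p → ¬ G.HasExit p) ∨
    ∃ w : G.V, w ≠ v ∧ (¬ G.Regular w ∨ G.UniqueReturnPath w) ∧
      (∃ p : List G.E, G.IsPathFromTo v w p) ∧
      ∀ p : List G.E, G.IsPathFromTo v w p → ∀ e ∈ p,
        ¬ G.TwoReturnPaths (G.s e) ∧ ¬ G.TwoReturnPaths (G.r e)

/-- The temperature `τ_E(γ) = sgn(|γ¹| − |γ|)` of a set of vertices, with the conventions
`sgn(0) = 0` and `sgn(∞) = 1`. -/
noncomputable def temp (γ : Set G.V) : ℤ :=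
  if {e : G.E | G.s e ∈ γ ∧ G.r e ∈ γ}.Infinite then 1
  else Int.sign ((Nat.card {e : G.E | G.s e ∈ γ ∧ G.r e ∈ γ} : ℤ) - (Nat.card γ : ℤ))

end DirGraph

namespace DirGraph

variable {G : DirGraph}

/-- `Lands v w`: some path from `v` through transition states first leaves them at `w`. -/
inductive Lands (G : DirGraph) : G.V → G.V → Prop
  | base (v : G.V) (h : ¬ G.TransitionState v) : Lands G v v
  | step (e : G.E) (w : G.V) (h : G.TransitionState (G.s e)) (hw : Lands G (G.r e) w) :
      Lands G (G.s e) w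

theorem mem_heredClosure {S : Set G.V} {v : G.V} :
    v ∈ G.heredClosure S ↔ ∃ u ∈ S, G.Reach u v := by
  constructor
  · intro h
    refine h {v | ∃ u ∈ S, G.Reach u v} ⟨?_, fun u hu => ⟨u, hu, .refl⟩⟩
    rintro a b ⟨u, hu, hua⟩ hab
    exact ⟨u, hu, hua.trans hab⟩
  · rintro ⟨u, hu, huv⟩ H ⟨hH, hS⟩
    exact hH u v (hS hu) huv

theorem hereditary_heredClosure (S : Set G.V) : G.Hereditary (G.heredClosure S) :=
  fun u v hu huv H hH => hH.1 u v (hu H hH) huv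

theorem subset_saturate (S : Set G.V) : S ⊆ G.saturate S := fun _ hv _ hT => hT.2 hv

theorem saturated_saturate (S : Set G.V) : G.Saturated (G.saturate S) :=
  fun v hv h T hT => hT.1 v hv fun e he => h e he T hT

theorem Lands.reach {v w : G.V} (h : G.Lands v w) : G.Reach v w := by
  induction h with
  | base v _ => exact .refl
  | step e w _ _ ih => exact .head ⟨e, rfl, rfl⟩ ih

theorem Lands.not_transitionState {v w : G.V} (h : G.Lands v w) : ¬ G.TransitionState w := by
  induction h with
  | base v h => exact h
  | step _ _ _ _ ih => exact ih

theorem exists_lands [Finite G.V] (v : G.V) : ∃ w, G.Lands v w := by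
  let R : G.V → G.V → Prop := fun w v => G.TransitionState v ∧ Relation.TransGen G.Step v w
  have : IsTrans G.V R := ⟨fun _ _ _ hab hbc => ⟨hbc.1, hbc.2.trans hab.2⟩⟩
  have : Std.Irrefl R := ⟨fun _ h => h.1.2 h.2⟩
  have hR : WellFounded R := Finite.wellFounded_of_trans_of_irrefl R
  induction v using hR.induction with
  | _ v ih =>
    by_cases hv : G.TransitionState v
    · obtain ⟨e, rfl⟩ := hv.1.2
      obtain ⟨w, hw⟩ := ih (G.r e) ⟨hv, .single ⟨e, rfl, rfl⟩⟩
      exact ⟨w, .step e w hv hw⟩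
    · exact ⟨v, .base v hv⟩

theorem Lands.reach_of_reach (ht : ∀ v : G.V, G.TransitionState v → ∃! e : G.E, G.s e = v)
    {v w x : G.V} (h : G.Lands v w) (hx : ¬ G.TransitionState x) (hvx : G.Reach v x) :
    G.Reach w x := by
  induction h with
  | base v _ => exact hvx
  | step e w h _ ih =>
    rcases hvx.cases_head with rfl | ⟨y, ⟨f, hf, rfl⟩, hy⟩
    · exact absurd h hx
    · exact ih ((ht _ h).unique hf rfl ▸ hy)

theorem Lands.unique (ht : ∀ v : G.V, G.TransitionState v → ∃! e : G.E, G.s e = v)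
    {v w w' : G.V} (h : G.Lands v w) (h' : G.Lands v w') : w = w' := by
  induction h with
  | base v hv =>
    cases h' with
    | base _ _ => rfl
    | step e _ h _ => exact absurd h hv
  | step e w h _ ih =>
    generalize hs : G.s e = v at h'
    cases h' with
    | base _ hv => exact absurd (hs ▸ h) hv
    | step f _ hf hw' => exact ih ((ht _ hf).unique hs rfl ▸ hw')

theorem mem_saturate_iff [Finite G.V]
    (ht : ∀ v : G.V, G.TransitionState v → ∃! e : G.E, G.s e = v)
    {H : Set G.V} (hH : G.Hereditary H) {v : G.V} :
    v ∈ G.saturate H ↔ ∃ w ∈ H, G.Lands v w := by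
  constructor
  · intro h
    refine h {v | ∃ w ∈ H, G.Lands v w} ⟨?_, ?_⟩
    · intro v hv hall
      by_cases hc : G.SupportsCycle v
      · have hvt : ¬ G.TransitionState v := fun h => h.2 hc
        obtain ⟨y, ⟨e, he, rfl⟩, hy⟩ := Relation.TransGen.head'_iff.1 hc
        obtain ⟨w, hw, hl⟩ := hall e he
        exact ⟨v, hH w v hw (hl.reach_of_reach ht hvt hy), .base v hvt⟩
      · obtain ⟨e, rfl⟩ := hv.2
        obtain ⟨w, hw, hl⟩ := hall e rfl
        exact ⟨w, hw, .step e w ⟨hv, hc⟩ hl⟩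
    · intro u hu
      obtain ⟨w, hw⟩ := exists_lands u
      exact ⟨w, hH u w hu hw.reach, hw⟩
  · rintro ⟨w, hw, hl⟩
    induction hl with
    | base v _ => exact subset_saturate H hw
    | step e w h _ ih =>
      refine saturated_saturate H _ h.1 fun f hf => ?_
      rw [(ht _ h).unique hf rfl]
      exact ih hw

theorem IsComponent.hereditary_diff {γ : Set G.V} (hγ : G.IsComponent γ) :
    G.Hereditary (G.heredClosure γ \ γ) := by
  rintro u v ⟨hu, huγ⟩ huv
  refine ⟨hereditary_heredClosure γ u v hu huv, fun hv => huγ ?_⟩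
  obtain ⟨g, hg, hgu⟩ := mem_heredClosure.1 hu
  rcases hγ with ⟨⟨_, hs⟩, hmax⟩ | ⟨x, rfl, _, hx⟩
  · have to_u : ∀ a ∈ γ, Relation.TransGen G.Step a u := fun a ha => (hs a ha g hg).trans_left hgu
    have of_u : ∀ a ∈ γ, Relation.TransGen G.Step u a :=
      fun a ha => Relation.TransGen.trans_right huv (hs v hv a ha)
    rw [← hmax (insert u γ) ⟨Set.insert_nonempty _ _, ?_⟩ (Set.subset_insert _ _)]
    · exact Set.mem_insert _ _
    · rintro a (rfl | ha) b (rfl | hb)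
      · exact (of_u g hg).trans (to_u g hg)
      · exact of_u b hb
      · exact to_u a ha
      · exact hs a ha b hb
  · obtain rfl : g = x := hg
    obtain rfl : v = g := hv
    rcases Relation.reflTransGen_iff_eq_or_transGen.1 hgu with h | h
    · exact h
    · exact absurd (h.trans_left huv) hx

theorem IsComponent.eq_of_mem {γ δ : Set G.V} (hγ : G.IsComponent γ) (hδ : G.IsComponent δ)
    {w : G.V} (hwγ : w ∈ γ) (hwδ : w ∈ δ) : γ = δ := by
  rcases hγ with ⟨⟨_, hs⟩, hmax⟩ | ⟨x, rfl, _, hx⟩ <;>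
    rcases hδ with ⟨⟨_, hs'⟩, hmax'⟩ | ⟨y, rfl, _, hy⟩
  · have hsc : G.StronglyConn (γ ∪ δ) := by
      refine ⟨⟨w, .inl hwγ⟩, fun a ha b hb => ?_⟩
      have h₁ : Relation.TransGen G.Step a w :=
        ha.elim (fun h => hs a h w hwγ) (fun h => hs' a h w hwδ)
      have h₂ : Relation.TransGen G.Step w b :=
        hb.elim (fun h => hs w hwγ b h) (fun h => hs' w hwδ b h)
      exact h₁.trans h₂
    rw [← hmax _ hsc Set.subset_union_left]
    exact hmax' _ hsc Set.subset_union_right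
  · obtain rfl : w = y := hwδ
    exact absurd (hs w hwγ w hwγ) hy
  · obtain rfl : w = x := hwγ
    exact absurd (hs' w hwδ w hwδ) hx
  · obtain rfl : w = x := hwγ
    obtain rfl : w = y := hwδ
    rfl

theorem exists_isComponent_mem {v : G.V} (hv : ¬ G.TransitionState v) :
    ∃ γ, G.IsComponent γ ∧ v ∈ γ := by
  by_cases hc : G.SupportsCycle v
  · refine ⟨{u | Relation.TransGen G.Step v u ∧ Relation.TransGen G.Step u v},
      .inl ⟨⟨⟨v, hc, hc⟩, fun a ha b hb => ha.2.trans hb.1⟩, fun δ hδ hsub => ?_⟩, hc, hc⟩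
    have hvδ : v ∈ δ := hsub ⟨hc, hc⟩
    exact Set.Subset.antisymm (fun u hu => ⟨hδ.2 v hvδ u hu, hδ.2 u hu v hvδ⟩) hsub
  · exact ⟨{v}, .inr ⟨v, rfl, fun h => hv ⟨h, hc⟩, hc⟩, rfl⟩

theorem mem_saturate_diff_iff [Finite G.V]
    (ht : ∀ v : G.V, G.TransitionState v → ∃! e : G.E, G.s e = v)
    {γ : Set G.V} (hγ : G.IsComponent γ) {v : G.V} :
    v ∈ G.saturate (G.heredClosure γ) \ G.saturate (G.heredClosure γ \ γ) ↔
      ∃ w ∈ γ, G.Lands v w := by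
  rw [Set.mem_sdiff, mem_saturate_iff ht (hereditary_heredClosure γ),
    mem_saturate_iff ht hγ.hereditary_diff]
  constructor
  · rintro ⟨⟨w, hw, hl⟩, h⟩
    by_contra hn
    exact h ⟨w, ⟨hw, fun hwγ => hn ⟨w, hwγ, hl⟩⟩, hl⟩
  · rintro ⟨w, hw, hl⟩
    refine ⟨⟨w, mem_heredClosure.2 ⟨w, hw, .refl⟩, hl⟩, ?_⟩
    rintro ⟨w', hw', hl'⟩
    exact hw'.2 (hl.unique ht hl' ▸ hw)

end DirGraph

open DirGraph in
/-- Lemma `lem:structure-2(iii)`: if every transition state of `G` has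
exactly one outgoing edge, then the sets
`saturation of H(γ) \ saturation of (H(γ) \ γ)`, for `γ ∈ Γ_E`, partition `E⁰`. -/
theorem stmt5 (G : DirGraph) (hcE : Countable G.E) (hfin : Finite G.V)
    (ht : ∀ v : G.V, G.TransitionState v → ∃! e : G.E, G.s e = v) :
    (∀ γ δ : Set G.V, G.IsComponent γ → G.IsComponent δ → γ ≠ δ →
      Disjoint (G.saturate (G.heredClosure γ) \ G.saturate (G.heredClosure γ \ γ))
        (G.saturate (G.heredClosure δ) \ G.saturate (G.heredClosure δ \ δ))) ∧
    (⋃ γ ∈ {γ : Set G.V | G.IsComponent γ},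
      (G.saturate (G.heredClosure γ) \ G.saturate (G.heredClosure γ \ γ))) =
      Set.univ := by
  refine ⟨fun γ δ hγ hδ hne => Set.disjoint_left.2 fun v hv hv' => hne ?_,
    Set.eq_univ_of_forall fun v => ?_⟩
  · obtain ⟨w, hw, hl⟩ := (mem_saturate_diff_iff ht hγ).1 hv
    obtain ⟨w', hw', hl'⟩ := (mem_saturate_diff_iff ht hδ).1 hv'
    exact hγ.eq_of_mem hδ hw (hl.unique ht hl' ▸ hw')
  · obtain ⟨w, hl⟩ := exists_lands v
    obtain ⟨γ, hγ, hw⟩ := exists_isComponent_mem hl.not_transitionState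
    exact Set.mem_biUnion (Set.mem_ofPred.2 hγ) ((mem_saturate_diff_iff ht hγ).2 ⟨w, hw, hl⟩)
end

section
/- Let E be a graph with finitely many vertices. Then E satisfies Condition (K) if and only if τ_E(γ) ≠ 0 for every component γ ∈ Γ_E; equivalently, if and only if no component of E is cyclic. -/
attribute [local instance] Classical.propDecidable

namespace DirGraph

variable {G : DirGraph}

/-- `G.FirstPassage v u p`: the list `p` is a nonempty path from `u` which ends at `v` and does
not meet `v` strictly in between. -/
inductive FirstPassage (G : DirGraph) (v : G.V) : G.V → List G.E → Prop
  | single (e : G.E) (he : G.r e = v) : FirstPassage G v (G.s e) [e]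
  | cons (e : G.E) (p : List G.E) (he : G.r e ≠ v) (hp : FirstPassage G v (G.r e) p) :
      FirstPassage G v (G.s e) (e :: p)

theorem firstPassage_iff {u v : G.V} {p : List G.E} :
    G.FirstPassage v u p ↔ ∃ h : p ≠ [], G.IsPathChain p ∧ G.s (p.head h) = u ∧
      G.r (p.getLast h) = v ∧ ∀ e ∈ p.dropLast, G.r e ≠ v := by
  constructor
  · intro hp
    induction hp with
    | single e he => exact ⟨by simp, List.isChain_singleton e, rfl, he, by simp⟩
    | cons e p he _ ih =>
      obtain ⟨hne, hchain, hs, hr, hd⟩ := ih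
      obtain ⟨f, p, rfl⟩ := List.exists_cons_of_ne_nil hne
      refine ⟨by simp, List.isChain_cons_cons.2 ⟨hs.symm, hchain⟩, rfl, by simpa using hr, ?_⟩
      rw [List.dropLast_cons_of_ne_nil hne]
      exact List.forall_mem_cons.2 ⟨he, hd⟩
  · rintro ⟨hne, hchain, hs, hr, hd⟩
    induction p generalizing u with
    | nil => exact absurd rfl hne
    | cons e p ih =>
      obtain rfl : G.s e = u := hs
      cases p with
      | nil => exact .single e hr
      | cons f p =>
        obtain ⟨hef, hchain⟩ := List.isChain_cons_cons.1 hchain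
        rw [List.dropLast_cons_of_ne_nil (by simp), List.forall_mem_cons] at hd
        exact .cons e _ hd.1 (ih (by simp) hchain hef.symm (by simpa using hr) hd.2)

theorem isReturnPath_iff_firstPassage {v : G.V} {p : List G.E} :
    G.IsReturnPath v p ↔ G.FirstPassage v v p :=
  firstPassage_iff.symm

theorem FirstPassage.transGen {u v : G.V} {p : List G.E} (hp : G.FirstPassage v u p) :
    Relation.TransGen G.Step u v := by
  induction hp with
  | single e he => exact .single ⟨e, rfl, he⟩
  | cons e p _ _ ih => exact .head ⟨e, rfl, rfl⟩ ih

/-- An edge from whose range `v` can be reached starts a first passage path to `v`. -/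
theorem exists_firstPassage_cons {v : G.V} (e : G.E) (h : G.Reach (G.r e) v) :
    ∃ p, G.FirstPassage v (G.s e) (e :: p) := by
  obtain ⟨w, hw⟩ : ∃ w, w = G.r e := ⟨_, rfl⟩
  rw [← hw] at h
  induction h using Relation.ReflTransGen.head_induction_on generalizing e with
  | refl => exact ⟨[], .single e hw.symm⟩
  | head hstep _ ih =>
    by_cases hv : G.r e = v
    · exact ⟨[], .single e hv⟩
    · obtain ⟨f, hf, hrf⟩ := hstep
      obtain ⟨p, hp⟩ := ih f hrf.symm
      rw [hf, hw] at hp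
      exact ⟨f :: p, .cons e _ hv hp⟩

theorem exists_firstPassage {u v : G.V} (h : Relation.TransGen G.Step u v) :
    ∃ p, G.FirstPassage v u p := by
  obtain ⟨_, ⟨e, rfl, rfl⟩, hr⟩ := Relation.TransGen.head'_iff.1 h
  obtain ⟨p, hp⟩ := exists_firstPassage_cons e hr
  exact ⟨_, hp⟩

/-- If `v` reaches a vertex with two first passage paths to `v`, then `v` supports two return
paths. -/
theorem twoReturnPaths_of_reach {u v : G.V} {p q : List G.E} (h : G.Reach v u)
    (hp : G.FirstPassage v u p) (hq : G.FirstPassage v u q) (hpq : p ≠ q) :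
    G.TwoReturnPaths v := by
  suffices H : ∀ w, G.Reach w u → G.TwoReturnPaths v ∨
      ∃ p q, G.FirstPassage v w p ∧ G.FirstPassage v w q ∧ p ≠ q by
    simpa [TwoReturnPaths, isReturnPath_iff_firstPassage] using H v h
  intro w hw
  induction hw using Relation.ReflTransGen.head_induction_on with
  | refl => exact .inr ⟨p, q, hp, hq, hpq⟩
  | head hstep _ ih =>
    obtain ⟨e, rfl, rfl⟩ := hstep
    rcases ih with ih | ⟨p', q', hp', hq', hne⟩
    · exact .inl ih
    · by_cases hv : G.r e = v
      · rw [hv] at hp' hq'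
        exact .inl ⟨p', q', isReturnPath_iff_firstPassage.2 hp',
          isReturnPath_iff_firstPassage.2 hq', hne⟩
      · exact .inr ⟨e :: p', e :: q', .cons e _ hv hp', .cons e _ hv hq', by simpa using hne⟩

/-- The set of vertices lying on a common cycle with `v`. -/
def scc (G : DirGraph) (v : G.V) : Set G.V :=
  {u | Relation.TransGen G.Step v u ∧ Relation.TransGen G.Step u v}

theorem stronglyConn_scc {v : G.V} (hv : G.SupportsCycle v) : G.StronglyConn (G.scc v) :=
  ⟨⟨v, hv, hv⟩, fun _ hu _ hw => hu.2.trans hw.1⟩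

theorem StronglyConn.subset_scc {γ : Set G.V} (hγ : G.StronglyConn γ) {v : G.V} (hv : v ∈ γ) :
    γ ⊆ G.scc v :=
  fun u hu => ⟨hγ.2 v hv u hu, hγ.2 u hu v hv⟩

theorem isComponent_scc {v : G.V} (hv : G.SupportsCycle v) : G.IsComponent (G.scc v) :=
  .inl ⟨stronglyConn_scc hv, fun _ hδ hsub => (hδ.subset_scc (hsub ⟨hv, hv⟩)).antisymm hsub⟩

/-- A component is either the set of vertices on cycles through some vertex, or the singleton of
a vertex not supporting a cycle. -/
theorem IsComponent.eq_scc_or_singleton {γ : Set G.V} (hγ : G.IsComponent γ) :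
    (∃ v, G.SupportsCycle v ∧ γ = G.scc v) ∨ ∃ v, ¬ G.SupportsCycle v ∧ γ = {v} := by
  rcases hγ with ⟨hconn, hmax⟩ | ⟨v, rfl, -, hv⟩
  · obtain ⟨v, hv⟩ := hconn.1
    have hcyc : G.SupportsCycle v := hconn.2 v hv v hv
    exact .inl ⟨v, hcyc, (hmax _ (stronglyConn_scc hcyc) (hconn.subset_scc hv)).symm⟩
  · exact .inr ⟨v, hv, rfl⟩

theorem IsComponent.nonempty {γ : Set G.V} (hγ : G.IsComponent γ) : γ.Nonempty := by
  rcases hγ with ⟨hconn, -⟩ | ⟨v, rfl, -⟩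
  · exact hconn.1
  · exact Set.singleton_nonempty v

theorem scc_eq_of_mem {u v : G.V} (hu : u ∈ G.scc v) : G.scc u = G.scc v :=
  Set.ext fun _ => ⟨fun hw => ⟨hu.1.trans hw.1, hw.2.trans hu.2⟩,
    fun hw => ⟨hu.2.trans hw.1, hw.2.trans hu.1⟩⟩

theorem exists_edge_mem_scc {u v : G.V} (hu : u ∈ G.scc v) :
    ∃ e, G.s e = u ∧ G.r e ∈ G.scc v := by
  obtain ⟨_, ⟨e, rfl, rfl⟩, hr⟩ := Relation.TransGen.head'_iff.1 hu.2
  exact ⟨e, rfl, hu.1.tail ⟨e, rfl, rfl⟩, Relation.TransGen.trans_right hr (hu.1.trans hu.2)⟩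

/-- Every vertex of `γ` emits at most one edge ending in `γ`. -/
def NoBranching (G : DirGraph) (γ : Set G.V) : Prop :=
  ∀ e f, G.s e ∈ γ → G.r e ∈ γ → G.r f ∈ γ → G.s e = G.s f → e = f

theorem FirstPassage.eq_of_noBranching {u v : G.V} (hv : G.SupportsCycle v)
    (hb : G.NoBranching (G.scc v)) (hu : u ∈ G.scc v) {p q : List G.E}
    (hp : G.FirstPassage v u p) (hq : G.FirstPassage v u q) : p = q := by
  have hmem : ∀ e, G.s e ∈ G.scc v → G.Reach (G.r e) v → G.r e ∈ G.scc v := fun e hs hr =>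
    ⟨hs.1.tail ⟨e, rfl, rfl⟩, Relation.TransGen.trans_right hr hv⟩
  have hedge : ∀ e l, G.FirstPassage v (G.s e) (e :: l) → G.s e ∈ G.scc v →
      G.r e ∈ G.scc v := by
    intro e l hl hs
    generalize hw : G.s e = w at hl
    cases hl with
    | single _ he => exact hmem e hs (he ▸ .refl)
    | cons _ _ _ hp => exact hmem e hs hp.transGen.to_reflTransGen
  induction hp generalizing q with
  | single e he =>
    have hre := hedge e _ (.single e he) hu
    generalize hw : G.s e = w at hq
    cases hq with
    | single f hf => rw [hb e f hu hre (by rw [hf]; exact ⟨hv, hv⟩) hw]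
    | cons f p hf hp =>
      have hrf := hedge f _ (.cons f p hf hp) (hw ▸ hu)
      exact absurd (hb e f hu hre hrf hw ▸ he) hf
  | cons e p he hp ih =>
    have hre := hedge e _ (.cons e p he hp) hu
    generalize hw : G.s e = w at hq
    cases hq with
    | single f hf =>
      exact absurd hf (hb e f hu hre (by rw [hf]; exact ⟨hv, hv⟩) hw ▸ he)
    | cons f q hf hq =>
      have hrf := hedge f _ (.cons f q hf hq) (hw ▸ hu)
      obtain rfl := hb e f hu hre hrf hw
      rw [ih hre hq]

theorem uniqueReturnPath_iff {v : G.V} :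
    G.UniqueReturnPath v ↔ G.SupportsCycle v ∧ G.NoBranching (G.scc v) := by
  constructor
  · rintro ⟨p, hp, huniq⟩
    refine ⟨(isReturnPath_iff_firstPassage.1 hp).transGen, fun e f hs hre hrf hef => ?_⟩
    by_contra hne
    obtain ⟨l, hl⟩ := exists_firstPassage_cons e hre.2.to_reflTransGen
    obtain ⟨m, hm⟩ := exists_firstPassage_cons f hrf.2.to_reflTransGen
    obtain ⟨a, b, ha, hb, hab⟩ := twoReturnPaths_of_reach hs.1.to_reflTransGen hl (hef ▸ hm)
      (fun h => hne (List.cons.inj h).1)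
    exact hab ((huniq a ha).trans (huniq b hb).symm)
  · rintro ⟨hv, hb⟩
    obtain ⟨p, hp⟩ := exists_firstPassage hv
    exact ⟨p, isReturnPath_iff_firstPassage.2 hp, fun q hq =>
      (isReturnPath_iff_firstPassage.1 hq).eq_of_noBranching hv hb ⟨hv, hv⟩ hp⟩

theorem conditionK_iff_forall_not_uniqueReturnPath :
    G.ConditionK ↔ ∀ v, ¬ G.UniqueReturnPath v := by
  refine forall_congr' fun v => ⟨?_, fun h => ?_⟩
  · rintro (h | ⟨p, q, hp, hq, hne⟩) ⟨a, ha, huniq⟩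
    · exact h ⟨a, ha⟩
    · exact hne ((huniq p hp).trans (huniq q hq).symm)
  · by_contra! hcon
    obtain ⟨⟨p, hp⟩, htwo⟩ := hcon
    exact h ⟨p, hp, fun q hq => by_contra fun hne => htwo ⟨q, p, hq, hp, hne⟩⟩

theorem cyclicComponent_scc {v : G.V} (h : G.UniqueReturnPath v) :
    G.CyclicComponent (G.scc v) := by
  obtain ⟨hv, hb⟩ := uniqueReturnPath_iff.1 h
  refine ⟨isComponent_scc hv, fun u hu => uniqueReturnPath_iff.2 ⟨hu.2.trans hu.1, ?_⟩⟩
  rwa [scc_eq_of_mem hu]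

theorem temp_singleton_ne_zero {v : G.V} (hv : ¬ G.SupportsCycle v) : G.temp {v} ≠ 0 := by
  have hempty : {e : G.E | G.s e ∈ ({v} : Set G.V) ∧ G.r e ∈ ({v} : Set G.V)} = ∅ :=
    Set.eq_empty_of_forall_notMem fun e he => hv (.single ⟨e, he⟩)
  rw [temp, hempty]
  simp

theorem temp_scc_eq_zero_iff [Finite G.V] {v : G.V} :
    G.temp (G.scc v) = 0 ↔ G.NoBranching (G.scc v) := by
  let S : Set G.E := {e | G.s e ∈ G.scc v ∧ G.r e ∈ G.scc v}
  let src : S → G.scc v := fun e => ⟨G.s e, e.2.1⟩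
  have hsurj : Function.Surjective src := fun ⟨u, hu⟩ => by
    obtain ⟨e, rfl, hr⟩ := exists_edge_mem_scc hu
    exact ⟨⟨e, hu, hr⟩, rfl⟩
  have hinj : Function.Injective src ↔ G.NoBranching (G.scc v) := by
    constructor
    · intro h e f hs hre hrf hef
      exact congrArg Subtype.val
        (@h ⟨e, hs, hre⟩ ⟨f, hef ▸ hs, hrf⟩ (Subtype.ext hef))
    · rintro h ⟨e, he⟩ ⟨f, hf⟩ hef
      exact Subtype.ext (h e f he.1 he.2 hf.2 (congrArg Subtype.val hef))
  have htemp : G.temp (G.scc v) =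
      if S.Infinite then 1 else Int.sign ((Nat.card S : ℤ) - (Nat.card (G.scc v) : ℤ)) := rfl
  rw [← hinj, htemp]
  constructor
  · intro h
    have hS : ¬ S.Infinite := fun hS => by simp [if_pos hS] at h
    rw [if_neg hS] at h
    have : Finite S := Set.not_infinite.1 hS
    rw [Int.sign_eq_zero_iff_zero, sub_eq_zero, Nat.cast_inj] at h
    exact (hsurj.bijective_of_nat_card_le h.le).1
  · intro h
    have hS : ¬ S.Infinite := Set.not_infinite.2 (Finite.of_injective src h)
    rw [if_neg hS, Nat.card_eq_of_bijective src ⟨h, hsurj⟩, sub_self, Int.sign_zero]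

end DirGraph

open DirGraph in
/-- Lemma `charKH(i)`: a graph with finitely many vertices satisfies
Condition (K) iff `τ_E(γ) ≠ 0` for every component `γ ∈ Γ_E`; equivalently, iff no
component is cyclic. -/
theorem stmt7 (G : DirGraph) (hcE : Countable G.E) (hfin : Finite G.V) :
    (G.ConditionK ↔ ∀ γ : Set G.V, G.IsComponent γ → G.temp γ ≠ 0) ∧
    (G.ConditionK ↔ ∀ γ : Set G.V, G.IsComponent γ → ¬ G.CyclicComponent γ) := by
  rw [conditionK_iff_forall_not_uniqueReturnPath]
  refine ⟨⟨fun h γ hγ htemp => ?_, fun h v hv => ?_⟩, fun h γ _ hγ => ?_, fun h v hv => ?_⟩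
  · rcases hγ.eq_scc_or_singleton with ⟨v, hv, rfl⟩ | ⟨v, hv, rfl⟩
    · exact h v (uniqueReturnPath_iff.2 ⟨hv, temp_scc_eq_zero_iff.1 htemp⟩)
    · exact temp_singleton_ne_zero hv htemp
  · obtain ⟨hcyc, hb⟩ := uniqueReturnPath_iff.1 hv
    exact h _ (isComponent_scc hcyc) (temp_scc_eq_zero_iff.2 hb)
  · obtain ⟨v, hv⟩ := hγ.1.nonempty
    exact h v (hγ.2 v hv)
  · exact h _ (cyclicComponent_scc hv).1 (cyclicComponent_scc hv)
end
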